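/- Fix d ≥ 3 and consider the uncontrolled randomised switching problem with the symmetric transition matrix P given by P_{i,j} = 1/(d−1) for i ≠ j and P_{i,i} = 0, and a cost vector c̄ ∈ ℝ^d such that the domain D has nonempty interior. Then there exist a function H : ℝ^d → S_d(ℝ) (symmetric d×d matrices) and a constant L ≥ 1 such that: (1) L^{-1}|v|² ≤ vᵀ H(y) v ≤ L|v|² for all y ∈ ℝ^d and v ∈ ℝ^d, and |H(y)| ≤ L; (2) H is of class C¹ with |∂_y H| ≤ L, and y ↦ H(y)^{-1} is of class C² with |H^{-1}| + |∂_y H^{-1}| + |∂²_{yy} H^{-1}| ≤ L; (3) for every y ∈ D and every v in the outward normal cone C(y), the vector H(y)v belongs to the reflection cone C_o(y) := { −∑_{i=1}^d α_i e_i : α_i ≥ 0 and α_i = 0 whenever y_i > ∑_j P_{i,j} y_j − c̄_i }. -/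

import Mathlib

open Matrix

open Filter
open scoped ContDiff Topology

/-!
The slacks `sᵢ(y) = (Qy + c̄)ᵢ` have the constant sum `σ = ∑ c̄ᵢ`, which is positive because `D` has
interior. Hence at every `y` some slack is at least `σ / d`, and this gives smooth weights `pᵢ(y)`
of total mass one, supported on the positive slacks. Moving inside `D` in the directions `±1` and
`eᵢ - eⱼ` shows that an outward normal `v` at `y` sums to zero and is maximal, hence equal to
`max v`, at each index of positive slack; so `∑ pᵢ(y) vᵢ = max v`, and `v - (∑ pᵢ(y) vᵢ) 1` lies in
the reflection cone.

It remains to find a symmetric matrix acting in this way on the vectors of sum zero. With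
`zᵢ = 1/d - pᵢ(y)`, take `H(y) = (I + 1 zᵀ)(I + z 1ᵀ)`. Since `∑ zᵢ = 0`, the factor `I + z 1ᵀ` has
inverse `I - z 1ᵀ`, so `H(y)` is uniformly elliptic and `H(y)⁻¹` is as smooth as `H(y)`.
-/

section BoundedSmooth

variable {E F G A ι : Type*} [NormedAddCommGroup E] [NormedSpace ℝ E]
  [NormedAddCommGroup F] [NormedSpace ℝ F] [NormedAddCommGroup G] [NormedSpace ℝ G]

/-- The class `C_b^∞` of smooth functions which are bounded together with each of their iterated
derivatives (order `0`, the function itself, included). -/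
def IsBoundedSmooth (f : E → F) : Prop :=
  ContDiff ℝ ∞ f ∧ ∀ k : ℕ, ∃ C : ℝ, ∀ x, ‖iteratedFDeriv ℝ k f x‖ ≤ C

namespace IsBoundedSmooth

theorem const (a : F) : IsBoundedSmooth (fun _ : E => a) := by
  refine ⟨contDiff_const, fun k => ?_⟩
  obtain rfl | hk := eq_or_ne k 0
  · exact ⟨‖a‖, fun x => by simp⟩
  · exact ⟨0, fun x => by simp [iteratedFDeriv_const_of_ne hk]⟩

theorem add {f g : E → F} (hf : IsBoundedSmooth f) (hg : IsBoundedSmooth g) :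
    IsBoundedSmooth (fun x => f x + g x) := by
  refine ⟨hf.1.add hg.1, fun k => ?_⟩
  obtain ⟨C, hC⟩ := hf.2 k
  obtain ⟨K, hK⟩ := hg.2 k
  have hk : (k : ℕ∞ω) ≤ ∞ := by exact_mod_cast le_top
  refine ⟨C + K, fun x => ?_⟩
  rw [fun_iteratedFDeriv_add_apply (hf.1.of_le hk).contDiffAt (hg.1.of_le hk).contDiffAt]
  exact norm_add_le_of_le (hC x) (hK x)

theorem neg {f : E → F} (hf : IsBoundedSmooth f) : IsBoundedSmooth (fun x => -f x) := by
  refine ⟨hf.1.neg, fun k => ?_⟩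
  obtain ⟨C, hC⟩ := hf.2 k
  refine ⟨C, fun x => ?_⟩
  simpa only [← Pi.neg_def, iteratedFDeriv_neg_apply, norm_neg] using hC x

theorem sub {f g : E → F} (hf : IsBoundedSmooth f) (hg : IsBoundedSmooth g) :
    IsBoundedSmooth (fun x => f x - g x) := by
  simpa only [sub_eq_add_neg] using hf.add hg.neg

theorem sum (s : Finset ι) {f : ι → E → F} (hf : ∀ i, IsBoundedSmooth (f i)) :
    IsBoundedSmooth (fun x => ∑ i ∈ s, f i x) := by
  classical
  induction s using Finset.induction_on with
  | empty => simpa using const (0 : F)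
  | insert a s ha ih => simpa [Finset.sum_insert ha] using (hf a).add ih

theorem mul [NormedRing A] [NormedAlgebra ℝ A] {f g : E → A} (hf : IsBoundedSmooth f)
    (hg : IsBoundedSmooth g) : IsBoundedSmooth (fun x => f x * g x) := by
  choose C hC using hf.2
  choose K hK using hg.2
  refine ⟨hf.1.mul hg.1, fun k =>
    ⟨∑ i ∈ Finset.range (k + 1), (k.choose i : ℝ) * C i * K (k - i), fun x => ?_⟩⟩
  refine (norm_iteratedFDeriv_mul_le hf.1 hg.1 x (by exact_mod_cast le_top)).trans ?_
  gcongr with i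
  · exact mul_nonneg (by positivity) ((norm_nonneg _).trans (hC i x))
  · exact hC i x
  · exact hK (k - i) x

theorem prod [NormedCommRing A] [NormedAlgebra ℝ A] (s : Finset ι) {f : ι → E → A}
    (hf : ∀ i, IsBoundedSmooth (f i)) : IsBoundedSmooth (fun x => ∏ i ∈ s, f i x) := by
  classical
  induction s using Finset.induction_on with
  | empty => simpa using const (1 : A)
  | insert a s ha ih => simpa [Finset.prod_insert ha] using (hf a).mul ih

theorem comp_continuousLinearMap_add {f : F → G} (hf : IsBoundedSmooth f) (g : E →L[ℝ] F) (a : F) :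
    IsBoundedSmooth (fun x => f (g x + a)) := by
  have hfa : ContDiff ℝ ∞ (fun y => f (y + a)) := hf.1.comp (contDiff_id.add contDiff_const)
  refine ⟨hfa.comp g.contDiff, fun k => ?_⟩
  obtain ⟨C, hC⟩ := hf.2 k
  refine ⟨C * ‖g‖ ^ k, fun x => ?_⟩
  have hcomp : iteratedFDeriv ℝ k (fun x => f (g x + a)) x =
      (iteratedFDeriv ℝ k f (g x + a)).compContinuousLinearMap fun _ => g := by
    rw [← iteratedFDeriv_comp_add_right]
    exact g.iteratedFDeriv_comp_right hfa x (by exact_mod_cast le_top)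
  rw [hcomp]
  refine (ContinuousMultilinearMap.norm_compContinuousLinearMap_le _ _).trans ?_
  rw [Finset.prod_const, Finset.card_univ, Fintype.card_fin]
  gcongr
  exact hC _

theorem of_hasCompactSupport_fderiv {f : E → F} (hf : ContDiff ℝ ∞ f) {C : ℝ}
    (hC : ∀ x, ‖f x‖ ≤ C) (hsupp : HasCompactSupport (fderiv ℝ f)) : IsBoundedSmooth f := by
  refine ⟨hf, fun k => ?_⟩
  cases k with
  | zero => exact ⟨C, fun x => by simpa using hC x⟩
  | succ k =>
    have hf' : ContDiff ℝ ∞ (fderiv ℝ f) := hf.fderiv_right (by simp)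
    obtain ⟨K, hK⟩ := (hsupp.iteratedFDeriv (𝕜 := ℝ) k).exists_bound_of_continuous
      (hf'.continuous_iteratedFDeriv (by exact_mod_cast le_top))
    exact ⟨K, fun x => by simpa only [norm_iteratedFDeriv_fderiv] using hK x⟩

theorem smoothTransition : IsBoundedSmooth Real.smoothTransition := by
  refine of_hasCompactSupport_fderiv Real.smoothTransition.contDiff (C := 1) (fun x => ?_)
    (HasCompactSupport.intro (isCompact_Icc (a := 0) (b := 1)) fun x hx => ?_)
  · rw [Real.norm_of_nonneg (Real.smoothTransition.nonneg x)]
    exact Real.smoothTransition.le_one x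
  · rw [Set.mem_Icc, not_and_or, not_le, not_le] at hx
    rcases hx with hx | hx
    · have hzero : Real.smoothTransition =ᶠ[𝓝 x] fun _ => 0 :=
        (eventually_lt_nhds hx).mono fun t ht => Real.smoothTransition.zero_of_nonpos ht.le
      rw [hzero.fderiv_eq, fderiv_fun_const, Pi.zero_apply]
    · have hone : Real.smoothTransition =ᶠ[𝓝 x] fun _ => 1 :=
        (eventually_gt_nhds hx).mono fun t ht => Real.smoothTransition.one_of_one_le ht.le
      rw [hone.fderiv_eq, fderiv_fun_const, Pi.zero_apply]

theorem eventually_norm_iteratedFDeriv_le {f : E → F} (hf : IsBoundedSmooth f) (k : ℕ) :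
    ∀ᶠ L in atTop, ∀ x, ‖iteratedFDeriv ℝ k f x‖ ≤ L := by
  obtain ⟨C, hC⟩ := hf.2 k
  filter_upwards [eventually_ge_atTop C] with L hL x using (hC x).trans hL

theorem eventually_norm_le {f : E → F} (hf : IsBoundedSmooth f) :
    ∀ᶠ L in atTop, ∀ x, ‖f x‖ ≤ L := by
  simpa only [norm_iteratedFDeriv_zero] using hf.eventually_norm_iteratedFDeriv_le 0

theorem eventually_norm_fderiv_le {f : E → F} (hf : IsBoundedSmooth f) :
    ∀ᶠ L in atTop, ∀ x, ‖fderiv ℝ f x‖ ≤ L := by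
  simpa only [norm_iteratedFDeriv_one] using hf.eventually_norm_iteratedFDeriv_le 1

theorem eventually_norm_fderiv_fderiv_le {f : E → F} (hf : IsBoundedSmooth f) :
    ∀ᶠ L in atTop, ∀ x, ‖fderiv ℝ (fderiv ℝ f) x‖ ≤ L := by
  simpa only [← norm_iteratedFDeriv_one, norm_iteratedFDeriv_fderiv]
    using hf.eventually_norm_iteratedFDeriv_le 2

end IsBoundedSmooth

theorem exists_isBoundedSmooth_sum_eq_one [Fintype ι] [NormedCommRing A] [NormedAlgebra ℝ A]
    {φ : ι → E → A} (hφ : ∀ i, IsBoundedSmooth (φ i)) (hone : ∀ x, ∃ i, φ i x = 1) :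
    ∃ p : ι → E → A, (∀ i, IsBoundedSmooth (p i)) ∧ (∀ x, ∑ i, p i x = 1) ∧
      ∀ i x, φ i x = 0 → p i x = 0 := by
  classical
  let _ : LinearOrder ι := linearOrderOfSTO WellOrderingRel
  -- Unlike `φ i / ∑ j, φ j`, these weights of total mass `1 - ∏ j, (1 - φ j)` need no quotient.
  refine ⟨fun i x => φ i x * ∏ j with j < i, (1 - φ j x),
    fun i => (hφ i).mul (.prod _ fun j => (IsBoundedSmooth.const 1).sub (hφ j)),
    fun x => ?_, fun i x hi => by simp only [hi, zero_mul]⟩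
  obtain ⟨j, hj⟩ := hone x
  have hprod : ∏ i, (1 - φ i x) = 0 :=
    Finset.prod_eq_zero (Finset.mem_univ j) (by rw [hj, sub_self])
  rw [Finset.prod_one_sub_ordered, sub_eq_zero] at hprod
  exact hprod.symm

theorem exists_isBoundedSmooth_weights_of_affine [Fintype ι] (g : ι → E →L[ℝ] ℝ) (c : ι → ℝ)
    {δ : ℝ} (hδ : 0 < δ) (hlarge : ∀ x, ∃ i, δ ≤ g i x + c i) :
    ∃ p : ι → E → ℝ, (∀ i, IsBoundedSmooth (p i)) ∧ (∀ x, ∑ i, p i x = 1) ∧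
      ∀ i x, g i x + c i ≤ 0 → p i x = 0 := by
  have harg : ∀ i x, (δ⁻¹ • g i) x + δ⁻¹ * c i = (g i x + c i) / δ := fun i x => by
    rw [_root_.smul_apply, smul_eq_mul]
    ring
  obtain ⟨p, hp, hsum, hzero⟩ := exists_isBoundedSmooth_sum_eq_one
    (φ := fun i x => Real.smoothTransition ((δ⁻¹ • g i) x + δ⁻¹ * c i))
    (fun i => IsBoundedSmooth.smoothTransition.comp_continuousLinearMap_add _ _) fun x => by
      obtain ⟨i, hi⟩ := hlarge x
      refine ⟨i, Real.smoothTransition.one_of_one_le ?_⟩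
      rwa [harg, one_le_div hδ]
  refine ⟨p, hp, hsum, fun i x hi => hzero i x (Real.smoothTransition.zero_of_nonpos ?_)⟩
  rw [harg]
  exact div_nonpos_of_nonpos_of_nonneg hi hδ.le

end BoundedSmooth

section Ellipticity

variable {E ι κ μ : Type*} [NormedAddCommGroup E] [NormedSpace ℝ E] [Fintype ι]

theorem IsBoundedSmooth.matrix_mul {A : E → Matrix κ ι ℝ} {B : E → Matrix ι μ ℝ}
    (hA : ∀ i j, IsBoundedSmooth fun x => A x i j) (hB : ∀ i j, IsBoundedSmooth fun x => B x i j)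
    (i : κ) (j : μ) : IsBoundedSmooth fun x => (A x * B x) i j :=
  .sum _ fun k => (hA i k).mul (hB k j)

variable [Fintype κ]

theorem sum_sq_mulVec_le (A : Matrix κ ι ℝ) (v : ι → ℝ) :
    ∑ i, (A *ᵥ v) i ^ 2 ≤ (∑ i, ∑ j, A i j ^ 2) * ∑ j, v j ^ 2 := by
  rw [Finset.sum_mul]
  exact Finset.sum_le_sum fun i _ => Finset.sum_mul_sq_le_sq_mul_sq _ _ _

theorem dotProduct_transpose_mul_self_mulVec (A : Matrix κ ι ℝ) (v : ι → ℝ) :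
    v ⬝ᵥ ((Aᵀ * A) *ᵥ v) = ∑ i, (A *ᵥ v) i ^ 2 := by
  rw [← mulVec_mulVec, dotProduct_mulVec, vecMul_transpose]
  simp only [dotProduct, sq]

theorem eventually_sum_sq_mulVec_le {A : E → Matrix κ ι ℝ}
    (hA : ∀ i j, IsBoundedSmooth fun x => A x i j) :
    ∀ᶠ L in atTop, ∀ x v, ∑ i, (A x *ᵥ v) i ^ 2 ≤ L * ∑ j, v j ^ 2 := by
  have hnorm : IsBoundedSmooth fun x => ∑ i, ∑ j, A x i j ^ 2 :=
    .sum _ fun i => .sum _ fun j => by simpa only [sq] using (hA i j).mul (hA i j)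
  filter_upwards [hnorm.eventually_norm_le] with L hL x v
  refine (sum_sq_mulVec_le (A x) v).trans ?_
  gcongr
  exact (le_abs_self _).trans (hL x)

theorem eventually_elliptic_transpose_mul_self [DecidableEq ι] {A : E → Matrix κ ι ℝ}
    {B : E → Matrix ι κ ℝ} (hA : ∀ i j, IsBoundedSmooth fun x => A x i j)
    (hB : ∀ i j, IsBoundedSmooth fun x => B x i j) (hBA : ∀ x, B x * A x = 1) :
    ∀ᶠ L in atTop, ∀ x v, L⁻¹ * ∑ i, v i ^ 2 ≤ v ⬝ᵥ (((A x)ᵀ * A x) *ᵥ v) ∧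
      v ⬝ᵥ (((A x)ᵀ * A x) *ᵥ v) ≤ L * ∑ i, v i ^ 2 := by
  filter_upwards [eventually_sum_sq_mulVec_le hA, eventually_sum_sq_mulVec_le hB,
    eventually_gt_atTop 0] with L hAL hBL hL x v
  rw [dotProduct_transpose_mul_self_mulVec]
  refine ⟨?_, hAL x v⟩
  rw [inv_mul_le_iff₀ hL]
  simpa only [mulVec_mulVec, hBA, one_mulVec] using hBL x (A x *ᵥ v)

end Ellipticity

section Shear

variable {R ι : Type*} [CommRing R] [DecidableEq ι]

/-- The matrix `I + z 1ᵀ`. It is a shear, with inverse `I - z 1ᵀ`, when the entries of `z` sum to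
zero. -/
def shear (z : ι → R) : Matrix ι ι R :=
  1 + vecMulVec z 1

theorem shear_apply (z : ι → R) (i j : ι) : shear z i j = (1 : Matrix ι ι R) i j + z i := by
  rw [shear, Matrix.add_apply, vecMulVec_apply, Pi.one_apply, mul_one]

theorem IsBoundedSmooth.shear {E : Type*} [NormedAddCommGroup E] [NormedSpace ℝ E] {z : E → ι → ℝ}
    (hz : ∀ i, IsBoundedSmooth fun x => z x i) (i j : ι) :
    IsBoundedSmooth fun x => shear (z x) i j := by
  simpa only [shear_apply] using (IsBoundedSmooth.const _).add (hz i)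

variable [Fintype ι]

theorem shear_mulVec (z v : ι → R) : shear z *ᵥ v = v + (∑ i, v i) • z := by
  rw [shear, add_mulVec, one_mulVec, vecMulVec_mulVec, one_dotProduct, op_smul_eq_smul]

theorem shear_transpose_mulVec (z v : ι → R) : (shear z)ᵀ *ᵥ v = v + (z ⬝ᵥ v) • 1 := by
  rw [shear, transpose_add, transpose_one, transpose_vecMulVec, add_mulVec, one_mulVec,
    vecMulVec_mulVec, op_smul_eq_smul]

theorem shear_neg_mul_shear {z : ι → R} (hz : ∑ i, z i = 0) : shear (-z) * shear z = 1 := by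
  rw [shear, shear, add_mul, one_mul, mul_add, mul_one, vecMulVec_mul_vecMulVec, one_dotProduct, hz,
    zero_smul, vecMulVec_zero, add_zero, neg_vecMulVec, add_neg_cancel_right]

theorem inv_shear_transpose_mul_shear {z : ι → R} (hz : ∑ i, z i = 0) :
    ((shear z)ᵀ * shear z)⁻¹ = shear (-z) * (shear (-z))ᵀ := by
  have hinv : (shear z)⁻¹ = shear (-z) := inv_eq_left_inv (shear_neg_mul_shear hz)
  rw [Matrix.mul_inv_rev, ← transpose_nonsing_inv, hinv]

end Shear

section Switching

variable {ι : Type*} [Fintype ι]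

/-- The cone `C(y)` of outward normals to `D` at `y`. -/
def outwardNormalCone (D : Set (ι → ℝ)) (y : ι → ℝ) : Set (ι → ℝ) :=
  {v | ∀ z ∈ D, v ⬝ᵥ (z - y) ≤ 0}

theorem dotProduct_nonpos_of_mem_outwardNormalCone {D : Set (ι → ℝ)} {y v u : ι → ℝ}
    (hv : v ∈ outwardNormalCone D y) (hu : y + u ∈ D) : v ⬝ᵥ u ≤ 0 := by
  simpa only [add_sub_cancel_left] using hv (y + u) hu

variable (ι) in
theorem card_sub_one_pos [Nontrivial ι] : 0 < (Fintype.card ι : ℝ) - 1 :=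
  sub_pos.2 (Nat.one_lt_cast.2 Fintype.one_lt_card)

variable [DecidableEq ι]

/-- The vector `Qy + c̄` with `Q = I - P`; the domain `D` is the set where it is nonnegative. -/
def slack (P : Matrix ι ι ℝ) (c y : ι → ℝ) : ι → ℝ :=
  (1 - P) *ᵥ y + c

theorem slack_apply (P : Matrix ι ι ℝ) (c y : ι → ℝ) (i : ι) :
    slack P c y i = y i - ∑ j, P i j * y j + c i := by
  rw [slack, sub_mulVec, one_mulVec]
  rfl

theorem slack_add (P : Matrix ι ι ℝ) (c y u : ι → ℝ) :
    slack P c (y + u) = slack P c y + (1 - P) *ᵥ u := by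
  rw [slack, slack, mulVec_add, add_right_comm]

theorem exists_sum_div_card_le_slack [Nonempty ι] {P : Matrix ι ι ℝ} {c : ι → ℝ}
    (hP : ∀ y, ∑ i, slack P c y i = ∑ i, c i) (y : ι → ℝ) :
    ∃ i, (∑ i, c i) / Fintype.card ι ≤ slack P c y i := by
  have hcard : (Fintype.card ι : ℝ) ≠ 0 := Nat.cast_ne_zero.2 Fintype.card_ne_zero
  obtain ⟨i, -, hi⟩ := Finset.exists_le_of_sum_le (s := Finset.univ)
    (f := fun _ => (∑ i, c i) / Fintype.card ι) (g := slack P c y) Finset.univ_nonempty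
    (by rw [hP, Finset.sum_const, Finset.card_univ, nsmul_eq_mul, mul_div_cancel₀ _ hcard])
  exact ⟨i, hi⟩

/-- The convex domain `D` of the switching problem. -/
def switchingDomain (P : Matrix ι ι ℝ) (c : ι → ℝ) : Set (ι → ℝ) :=
  {y | ∀ i, 0 ≤ slack P c y i}

theorem switchingDomain_eq (P : Matrix ι ι ℝ) (c : ι → ℝ) :
    switchingDomain P c = {x | ∀ i, (∑ j, P i j * x j) - c i ≤ x i} := by
  ext x
  refine forall_congr' fun i => ?_
  rw [slack_apply, ← sub_nonneg (b := _ - _)]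
  ring_nf

/-- The reflection cone `C_o(y)`: the vectors `-α` with `α ≥ 0` supported where the slack is not
positive. -/
def reflectionCone (P : Matrix ι ι ℝ) (c y : ι → ℝ) : Set (ι → ℝ) :=
  {w | ∃ α : ι → ℝ, (∀ i, 0 ≤ α i) ∧ (∀ i, 0 < slack P c y i → α i = 0) ∧ w = -α}

theorem exists_isBoundedSmooth_weights_of_le_slack (P : Matrix ι ι ℝ) (c : ι → ℝ) {δ : ℝ}
    (hδ : 0 < δ) (hlarge : ∀ y, ∃ i, δ ≤ slack P c y i) :
    ∃ p : ι → (ι → ℝ) → ℝ, (∀ i, IsBoundedSmooth (p i)) ∧ (∀ y, ∑ i, p i y = 1) ∧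
      ∀ i y, slack P c y i ≤ 0 → p i y = 0 := by
  let g : ι → (ι → ℝ) →L[ℝ] ℝ := fun i =>
    ContinuousLinearMap.proj i ∘L LinearMap.toContinuousLinearMap (1 - P).mulVecLin
  have hg : ∀ i y, g i y + c i = slack P c y i := fun i y => by
    simp [g, slack_apply, mulVec, dotProduct]
  simp only [← hg] at hlarge ⊢
  exact exists_isBoundedSmooth_weights_of_affine g c hδ hlarge

variable (ι) in
/-- The transition matrix `P` of the symmetric example: from each state, a jump to one of the other
states, all equally likely. -/
noncomputable def uniformTransition : Matrix ι ι ℝ :=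
  of fun i j => if i = j then 0 else 1 / (Fintype.card ι - 1)

theorem one_sub_uniformTransition_mulVec_apply (y : ι → ℝ) (i : ι) :
    ((1 - uniformTransition ι) *ᵥ y) i = y i - ((∑ j, y j) - y i) / (Fintype.card ι - 1) := by
  have hentry : ∀ j, uniformTransition ι i j * y j =
      y j / (Fintype.card ι - 1) - if i = j then y j / (Fintype.card ι - 1) else 0 := fun j => by
    rw [uniformTransition, of_apply]
    split_ifs <;> ring
  rw [sub_mulVec, one_mulVec, Pi.sub_apply, mulVec, dotProduct, Finset.sum_congr rfl fun j _ =>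
    hentry j, Finset.sum_sub_distrib, ← Finset.sum_div, Fintype.sum_ite_eq, sub_div]

variable [Nontrivial ι] {c y v w : ι → ℝ}

theorem one_sub_uniformTransition_mulVec_const (a : ℝ) :
    ((1 - uniformTransition ι) *ᵥ fun _ => a) = 0 := by
  have hcard := (card_sub_one_pos ι).ne'
  ext i
  rw [one_sub_uniformTransition_mulVec_apply, Finset.sum_const, Finset.card_univ, nsmul_eq_mul,
    ← sub_one_mul, mul_div_cancel_left₀ _ hcard, sub_self, Pi.zero_apply]

theorem one_sub_uniformTransition_mulVec_of_sum_eq_zero {u : ι → ℝ} (hu : ∑ i, u i = 0) :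
    (1 - uniformTransition ι) *ᵥ u = (Fintype.card ι / (Fintype.card ι - 1) : ℝ) • u := by
  have hcard := (card_sub_one_pos ι).ne'
  ext i
  rw [one_sub_uniformTransition_mulVec_apply, hu, Pi.smul_apply, smul_eq_mul]
  field_simp
  ring

theorem sum_slack_uniformTransition (c y : ι → ℝ) :
    ∑ i, slack (uniformTransition ι) c y i = ∑ i, c i := by
  have hcard := (card_sub_one_pos ι).ne'
  have hsum : ∑ i, ((1 - uniformTransition ι) *ᵥ y) i = 0 := by
    simp only [one_sub_uniformTransition_mulVec_apply, Finset.sum_sub_distrib, ← Finset.sum_div,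
      Finset.sum_const, Finset.card_univ, nsmul_eq_mul]
    field_simp
    ring
  simp only [slack, Pi.add_apply, Finset.sum_add_distrib, hsum, zero_add]

theorem slack_add_smul_single_sub_single (c y : ι → ℝ) (i j : ι) (ε : ℝ) :
    slack (uniformTransition ι) c
        (y + (ε * ((Fintype.card ι - 1) / Fintype.card ι)) • (Pi.single i 1 - Pi.single j 1)) =
      slack (uniformTransition ι) c y + ε • (Pi.single i 1 - Pi.single j 1) := by
  have hcard := (card_sub_one_pos ι).ne'
  have hcard' : (Fintype.card ι : ℝ) ≠ 0 := Nat.cast_ne_zero.2 Fintype.card_ne_zero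
  have hsum : ∑ k, (Pi.single i 1 - Pi.single j 1 : ι → ℝ) k = 0 := by simp
  rw [slack_add, mulVec_smul, one_sub_uniformTransition_mulVec_of_sum_eq_zero hsum, smul_smul]
  congr 2
  field_simp

theorem sum_pos_of_interior_switchingDomain_nonempty
    (hint : (interior (switchingDomain (uniformTransition ι) c)).Nonempty) : 0 < ∑ i, c i := by
  obtain ⟨x, hx⟩ := hint
  obtain ⟨i, j, hij⟩ := exists_pair_ne ι
  let shift : ℝ → ι → ℝ := fun t =>
    x + (t * ((Fintype.card ι - 1) / Fintype.card ι)) • (Pi.single i 1 - Pi.single j 1)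
  have hcont : Tendsto shift (𝓝 0) (𝓝 x) :=
    Continuous.tendsto' (by fun_prop) _ _ (by simp [shift])
  have hmem : ∀ᶠ t in 𝓝[>] 0, shift t ∈ switchingDomain (uniformTransition ι) c :=
    nhdsWithin_le_nhds (hcont (mem_interior_iff_mem_nhds.1 hx))
  obtain ⟨t, htD, ht⟩ := (hmem.and self_mem_nhdsWithin).exists
  rw [← sum_slack_uniformTransition c (shift t)]
  refine Finset.sum_pos' (fun k _ => htD k) ⟨i, Finset.mem_univ i, ?_⟩
  rw [slack_add_smul_single_sub_single]
  simpa [hij] using add_pos_of_nonneg_of_pos (interior_subset hx i) ht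

theorem sum_eq_zero_of_mem_outwardNormalCone (hy : y ∈ switchingDomain (uniformTransition ι) c)
    (hv : v ∈ outwardNormalCone (switchingDomain (uniformTransition ι) c) y) : ∑ i, v i = 0 := by
  have hline : ∀ a : ℝ, (∑ i, v i) * a ≤ 0 := fun a => by
    rw [Finset.sum_mul]
    refine dotProduct_nonpos_of_mem_outwardNormalCone (u := fun _ => a) hv fun i => ?_
    rw [slack_add, one_sub_uniformTransition_mulVec_const, add_zero]
    exact hy i
  linarith [hline 1, hline (-1)]

theorem le_of_mem_outwardNormalCone (hy : y ∈ switchingDomain (uniformTransition ι) c)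
    (hv : v ∈ outwardNormalCone (switchingDomain (uniformTransition ι) c) y) (i : ι) {j : ι}
    (hj : 0 < slack (uniformTransition ι) c y j) : v i ≤ v j := by
  set ε := slack (uniformTransition ι) c y j with hε
  have hcard := card_sub_one_pos ι
  have hmem : y + (ε * ((Fintype.card ι - 1) / Fintype.card ι)) •
      (Pi.single i 1 - Pi.single j 1 : ι → ℝ) ∈ switchingDomain (uniformTransition ι) c := by
    intro k
    have hsingle : (0 : ι → ℝ) ≤ Pi.single i 1 := Pi.single_nonneg.2 zero_le_one
    have hi : 0 ≤ ε * (Pi.single i 1 : ι → ℝ) k := mul_nonneg hj.le (hsingle k)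
    have hjk : ε * (Pi.single j 1 : ι → ℝ) k ≤ slack (uniformTransition ι) c y k := by
      obtain rfl | hkj := eq_or_ne k j
      · rw [Pi.single_eq_same, mul_one]
      · rw [Pi.single_eq_of_ne hkj, mul_zero]
        exact hy k
    rw [slack_add_smul_single_sub_single, Pi.add_apply, Pi.smul_apply, Pi.sub_apply, smul_eq_mul]
    linarith
  have hdot := dotProduct_nonpos_of_mem_outwardNormalCone hv hmem
  rw [dotProduct_smul, dotProduct_sub, dotProduct_single_one, dotProduct_single_one,
    smul_eq_mul] at hdot
  exact sub_nonpos.1 (nonpos_of_mul_nonpos_right hdot (by positivity))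

theorem dotProduct_eq_of_mem_outwardNormalCone
    (hy : y ∈ switchingDomain (uniformTransition ι) c)
    (hv : v ∈ outwardNormalCone (switchingDomain (uniformTransition ι) c) y)
    (hw : ∑ i, w i = 1) (hsupp : ∀ i, slack (uniformTransition ι) c y i ≤ 0 → w i = 0) {j : ι}
    (hj : 0 < slack (uniformTransition ι) c y j) : w ⬝ᵥ v = v j := by
  have hconst : ∀ k, w k * v k = w k * v j := fun k => by
    obtain hk | hk := le_or_gt (slack (uniformTransition ι) c y k) 0
    · rw [hsupp k hk, zero_mul, zero_mul]
    · rw [le_antisymm (le_of_mem_outwardNormalCone hy hv k hj)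
        (le_of_mem_outwardNormalCone hy hv j hk)]
  rw [dotProduct, Finset.sum_congr rfl fun k _ => hconst k, ← Finset.sum_mul, hw, one_mul]

theorem sub_dotProduct_smul_one_mem_reflectionCone
    (hy : y ∈ switchingDomain (uniformTransition ι) c)
    (hv : v ∈ outwardNormalCone (switchingDomain (uniformTransition ι) c) y)
    (hw : ∑ i, w i = 1) (hsupp : ∀ i, slack (uniformTransition ι) c y i ≤ 0 → w i = 0) :
    v - (w ⬝ᵥ v) • 1 ∈ reflectionCone (uniformTransition ι) c y := by
  obtain ⟨j, -, hwj⟩ := Finset.exists_ne_zero_of_sum_ne_zero (hw.trans_ne one_ne_zero)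
  have hj : 0 < slack (uniformTransition ι) c y j := not_le.1 (mt (hsupp j) hwj)
  refine ⟨(w ⬝ᵥ v) • 1 - v, fun i => ?_, fun i hi => ?_, (neg_sub _ _).symm⟩
  · simpa [dotProduct_eq_of_mem_outwardNormalCone hy hv hw hsupp hj]
      using le_of_mem_outwardNormalCone hy hv i hj
  · simp [dotProduct_eq_of_mem_outwardNormalCone hy hv hw hsupp hi]

theorem shear_transpose_mul_shear_mulVec_mem_reflectionCone
    (hy : y ∈ switchingDomain (uniformTransition ι) c)
    (hv : v ∈ outwardNormalCone (switchingDomain (uniformTransition ι) c) y)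
    (hw : ∑ i, w i = 1) (hsupp : ∀ i, slack (uniformTransition ι) c y i ≤ 0 → w i = 0) (a : ℝ) :
    ((shear (a • 1 - w))ᵀ * shear (a • 1 - w)) *ᵥ v ∈
      reflectionCone (uniformTransition ι) c y := by
  have hsum := sum_eq_zero_of_mem_outwardNormalCone hy hv
  have hdot : (a • 1 - w) ⬝ᵥ v = -(w ⬝ᵥ v) := by
    rw [sub_dotProduct, smul_dotProduct, one_dotProduct, hsum, smul_zero, zero_sub]
  rw [← mulVec_mulVec, shear_mulVec, hsum, zero_smul, add_zero, shear_transpose_mulVec, hdot,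
    neg_smul, ← sub_eq_add_neg]
  exact sub_dotProduct_smul_one_mem_reflectionCone hy hv hw hsupp

theorem exists_isBoundedSmooth_shear_reflecting
    (hint : (interior (switchingDomain (uniformTransition ι) c)).Nonempty) :
    ∃ z : (ι → ℝ) → ι → ℝ, (∀ i, IsBoundedSmooth fun y => z y i) ∧ (∀ y, ∑ i, z y i = 0) ∧
      ∀ y ∈ switchingDomain (uniformTransition ι) c,
        ∀ v ∈ outwardNormalCone (switchingDomain (uniformTransition ι) c) y,
          ((shear (z y))ᵀ * shear (z y)) *ᵥ v ∈ reflectionCone (uniformTransition ι) c y := by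
  have hcard : (Fintype.card ι : ℝ) ≠ 0 := Nat.cast_ne_zero.2 Fintype.card_ne_zero
  obtain ⟨p, hp, hsum, hsupp⟩ := exists_isBoundedSmooth_weights_of_le_slack (uniformTransition ι) c
    (div_pos (sum_pos_of_interior_switchingDomain_nonempty hint)
      (Nat.cast_pos.2 Fintype.card_pos))
    (exists_sum_div_card_le_slack (sum_slack_uniformTransition c))
  refine ⟨fun y => (Fintype.card ι : ℝ)⁻¹ • 1 - (p · y),
    fun i => (IsBoundedSmooth.const _).sub (hp i), fun y => ?_, fun y hy v hv =>
      shear_transpose_mul_shear_mulVec_mem_reflectionCone hy hv (hsum y) (hsupp · y) _⟩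
  simp [hsum, hcard]

end Switching

theorem existence_of_smooth_symmetric_reflection_operator_symmetric_example_general
    {ι : Type*} [Fintype ι] [DecidableEq ι] [Nontrivial ι]
    (P : Matrix ι ι ℝ)
    (hP : P = Matrix.of fun i j => if i = j then (0 : ℝ) else 1 / (Fintype.card ι - 1))
    (c : ι → ℝ)
    (D : Set (ι → ℝ))
    (hD : D = {x | ∀ i, (∑ j, P i j * x j) - c i ≤ x i})
    (hint : (interior D).Nonempty) :
    ∃ (H : (ι → ℝ) → Matrix ι ι ℝ) (L : ℝ),
      1 ≤ L ∧
      (∀ y, (H y).IsSymm) ∧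
      (∀ y v : ι → ℝ,
        L⁻¹ * (∑ i, (v i) ^ 2) ≤ v ⬝ᵥ (H y *ᵥ v) ∧
        v ⬝ᵥ (H y *ᵥ v) ≤ L * (∑ i, (v i) ^ 2)) ∧
      (∀ y i j, |H y i j| ≤ L) ∧
      (∀ i j : ι, ContDiff ℝ 1 (fun y => H y i j)) ∧
      (∀ (y : ι → ℝ) (i j : ι),
        ‖fderiv ℝ (fun y' => H y' i j) y‖ ≤ L) ∧
      (∀ i j : ι, ContDiff ℝ 2 (fun y => (H y)⁻¹ i j)) ∧
      (∀ (y : ι → ℝ) (i j : ι),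
        |(H y)⁻¹ i j| ≤ L ∧
        ‖fderiv ℝ (fun y' => (H y')⁻¹ i j) y‖ ≤ L ∧
        ‖fderiv ℝ (fderiv ℝ (fun y' => (H y')⁻¹ i j)) y‖ ≤ L) ∧
      (∀ y ∈ D, ∀ v : ι → ℝ,
        (∀ z ∈ D, (∑ i, v i * (z i - y i)) ≤ 0) →
        ∃ α : ι → ℝ, (∀ i, 0 ≤ α i) ∧
          (∀ i, (∑ j, P i j * y j) - c i < y i → α i = 0) ∧
          H y *ᵥ v = -α) := by
  obtain rfl : P = uniformTransition ι := hP
  rw [← switchingDomain_eq] at hD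
  subst hD
  obtain ⟨z, hz, hz_sum, hz_reflect⟩ := exists_isBoundedSmooth_shear_reflecting hint
  have hA := IsBoundedSmooth.shear hz
  have hB := IsBoundedSmooth.shear (z := fun y => -z y) fun i => (hz i).neg
  have hH := IsBoundedSmooth.matrix_mul (A := fun y => (shear (z y))ᵀ) (fun i j => hA j i) hA
  have hK : ∀ i j, IsBoundedSmooth fun y => ((shear (z y))ᵀ * shear (z y))⁻¹ i j := by
    simp only [inv_shear_transpose_mul_shear (hz_sum _)]
    exact IsBoundedSmooth.matrix_mul hB fun i j => hB j i
  have hle : ∀ k : ℕ, (k : ℕ∞ω) ≤ ∞ := fun k => by exact_mod_cast le_top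
  have elliptic :=
    eventually_elliptic_transpose_mul_self hA hB fun y => shear_neg_mul_shear (hz_sum y)
  have H_le := eventually_all.2 fun i => eventually_all.2 fun j => (hH i j).eventually_norm_le
  have dH_le := eventually_all.2 fun i =>
    eventually_all.2 fun j => (hH i j).eventually_norm_fderiv_le
  have K_le := eventually_all.2 fun i => eventually_all.2 fun j => (hK i j).eventually_norm_le
  have dK_le := eventually_all.2 fun i =>
    eventually_all.2 fun j => (hK i j).eventually_norm_fderiv_le
  have ddK_le := eventually_all.2 fun i =>
    eventually_all.2 fun j => (hK i j).eventually_norm_fderiv_fderiv_le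
  obtain ⟨L, hL, elliptic, H_le, dH_le, K_le, dK_le, ddK_le⟩ := ((eventually_ge_atTop 1).and
    (elliptic.and (H_le.and (dH_le.and (K_le.and (dK_le.and ddK_le)))))).exists
  refine ⟨fun y => (shear (z y))ᵀ * shear (z y), L, hL, fun y => isSymm_transpose_mul_self _,
    elliptic, fun y i j => H_le i j y, fun i j => (hH i j).1.of_le (hle 1),
    fun y i j => dH_le i j y, fun i j => (hK i j).1.of_le (hle 2),
    fun y i j => ⟨K_le i j y, dK_le i j y, ddK_le i j y⟩, fun y hy v hv => ?_⟩
  obtain ⟨α, hα, hα_zero, h⟩ := hz_reflect y hy v hv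
  refine ⟨α, hα, fun i hi => hα_zero i ?_, h⟩
  rw [slack_apply]
  linarith

/-- The uncontrolled randomised switching problem in dimension
`d = n + 3 ≥ 3` with the symmetric transition matrix `P i j = 1/(d−1)` for `i ≠ j`,
`P i i = 0`, and cost vector `c̄` such that `D` has nonempty interior.  There exist
`H : ℝ^d → S_d(ℝ)` and `L ≥ 1` such that:
(1) `L⁻¹|v|² ≤ vᵀ H(y) v ≤ L|v|²` and `|H(y)| ≤ L` (entrywise);
(2) `H` is `C¹` with `|∂H| ≤ L`, and `y ↦ H(y)⁻¹` is `C²` with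
`|H⁻¹| + |∂H⁻¹| + |∂²H⁻¹| ≤ L` (entrywise, derivative norms bounded by `L`);
(3) for every `y ∈ D` and `v` in the outward normal cone at `y`, `H(y) v` lies in
the reflection cone `C_o(y)`. -/
theorem existence_of_smooth_symmetric_reflection_operator_symmetric_example
    (n : ℕ)
    (P : Matrix (Fin (n + 3)) (Fin (n + 3)) ℝ)
    (hP : P = Matrix.of fun i j => if i = j then (0 : ℝ) else 1 / (n + 2))
    (c : Fin (n + 3) → ℝ)
    (D : Set (Fin (n + 3) → ℝ))
    (hD : D = {x | ∀ i, (∑ j, P i j * x j) - c i ≤ x i})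
    (hint : (interior D).Nonempty) :
    ∃ (H : (Fin (n + 3) → ℝ) → Matrix (Fin (n + 3)) (Fin (n + 3)) ℝ) (L : ℝ),
      1 ≤ L ∧
      (∀ y, (H y).IsSymm) ∧
      (∀ y v : Fin (n + 3) → ℝ,
        L⁻¹ * (∑ i, (v i) ^ 2) ≤ v ⬝ᵥ (H y *ᵥ v) ∧
        v ⬝ᵥ (H y *ᵥ v) ≤ L * (∑ i, (v i) ^ 2)) ∧
      (∀ y i j, |H y i j| ≤ L) ∧
      (∀ i j : Fin (n + 3), ContDiff ℝ 1 (fun y => H y i j)) ∧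
      (∀ (y : Fin (n + 3) → ℝ) (i j : Fin (n + 3)),
        ‖fderiv ℝ (fun y' => H y' i j) y‖ ≤ L) ∧
      (∀ i j : Fin (n + 3), ContDiff ℝ 2 (fun y => (H y)⁻¹ i j)) ∧
      (∀ (y : Fin (n + 3) → ℝ) (i j : Fin (n + 3)),
        |(H y)⁻¹ i j| ≤ L ∧
        ‖fderiv ℝ (fun y' => (H y')⁻¹ i j) y‖ ≤ L ∧
        ‖fderiv ℝ (fderiv ℝ (fun y' => (H y')⁻¹ i j)) y‖ ≤ L) ∧
      (∀ y ∈ D, ∀ v : Fin (n + 3) → ℝ,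
        (∀ z ∈ D, (∑ i, v i * (z i - y i)) ≤ 0) →
        ∃ α : Fin (n + 3) → ℝ, (∀ i, 0 ≤ α i) ∧
          (∀ i, (∑ j, P i j * y j) - c i < y i → α i = 0) ∧
          H y *ᵥ v = -α) := by
  exact existence_of_smooth_symmetric_reflection_operator_symmetric_example_general P
    (by rw [hP, Fintype.card_fin]; push_cast; ring_nf) c D hD hint
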